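/- Let f : ℝ² × E → ℝ be smooth, where E is a finite-dimensional real vector space, and let q(x, ξ) = x² + ξ². Suppose the Poisson bracket {q, f} = 2x ∂f/∂ξ − 2ξ ∂f/∂x vanishes identically (bracket in the (x,ξ) variables). Then there exists a continuous function g : ℝ_{≥0} × E → ℝ, smooth on the interior and with all partial derivatives extending continuously to the boundary, such that f(x, ξ, e) = g(x² + ξ², e) for all (x, ξ, e). -/

import Mathlib

/-!
The bracket condition says that `f` is constant along the circles `x² + ξ² = r²`, because the
Hamiltonian flow of `x² + ξ²` is rotation (`rotation_invariant`). Hence `f(x, ξ, e) = h(√(x² + ξ²), e)`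
with `h(x, e) = f(x, 0, e)`, a smooth function that is even in `x`, and it remains to write
`h(√t, e)`, for `t ≥ 0`, as the restriction of a smooth function on `ℝ × E`. This is Whitney's even
function theorem with parameters (`whitney_even`).

Repeated use of Hadamard's lemma expands `h` as `∑ bₖ(e) x²ᵏ` with smooth remainders
(`even_expansion`). After a cutoff in `e`, Borel's lemma (`exists_borel`) gives a smooth `B(t, e)` with
the Taylor coefficients `bₖ(e)` along `t = 0`. The difference `H(x, e)` between the cut-off `h(x, e)` and `B(x², e)` is
then flat along `x = 0`, that is, divisible by every power of `x` with smooth quotient, and a flat function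
remains smooth under the substitution `x = √t` (`contDiff_flat_sqrt`). So `B(t, e) + H(√t, e)` is an
extension, locally in `e`. A partition of unity glues the local extensions.
-/

section EvenFunctions

open scoped ContDiff Topology
open Set Filter MeasureTheory

variable {E : Type*} [NormedAddCommGroup E] [NormedSpace ℝ E]

/-! ### Invariance under rotation -/

/-- The Hamiltonian flow of `x² + ξ²` is rotation of the `(x, ξ)` plane, so `f` is constant along
circles. -/
theorem rotation_invariant (f : ℝ → ℝ → E → ℝ)
    (hf : ContDiff ℝ (⊤ : ℕ∞) (fun p : ℝ × ℝ × E => f p.1 p.2.1 p.2.2))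
    (hbracket : ∀ (x ξ : ℝ) (e : E),
      2 * x * deriv (fun s => f x s e) ξ - 2 * ξ * deriv (fun s => f s ξ e) x = 0)
    (r θ : ℝ) (e : E) : f (r * Real.cos θ) (r * Real.sin θ) e = f r 0 e := by
  have hd : ∀ θ, HasDerivAt (fun θ => f (r * Real.cos θ) (r * Real.sin θ) e) 0 θ := by
    intro θ
    set x := r * Real.cos θ with hx
    set ξ := r * Real.sin θ with hξ
    have hF := ((hf.differentiable (by simp)) (x, ξ, e)).hasFDerivAt
    set D := fderiv ℝ (fun p : ℝ × ℝ × E => f p.1 p.2.1 p.2.2) (x, ξ, e)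
    have h1 : HasDerivAt (fun s => f s ξ e) (D (1, 0, 0)) x :=
      hF.comp_hasDerivAt (f := fun s : ℝ => (s, ξ, e)) x
        ((hasDerivAt_id x).prodMk ((hasDerivAt_const x ξ).prodMk (hasDerivAt_const x e)))
    have h2 : HasDerivAt (fun s => f x s e) (D (0, 1, 0)) ξ :=
      hF.comp_hasDerivAt (f := fun s : ℝ => (x, s, e)) ξ
        ((hasDerivAt_const ξ x).prodMk ((hasDerivAt_id ξ).prodMk (hasDerivAt_const ξ e)))
    have h3 := hF.comp_hasDerivAt
      (f := fun θ : ℝ => (r * Real.cos θ, r * Real.sin θ, e)) θ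
      (((Real.hasDerivAt_cos θ).const_mul r).prodMk
        (((Real.hasDerivAt_sin θ).const_mul r).prodMk (hasDerivAt_const θ e)))
    have hb := hbracket x ξ e
    rw [h1.deriv, h2.deriv] at hb
    have hv : ((r * -Real.sin θ, r * Real.cos θ, 0) : ℝ × ℝ × E) =
        (-ξ) • (1, 0, 0) + x • (0, 1, 0) := by
      simp [hx, hξ]
    rw [hv, map_add, map_smul, map_smul, smul_eq_mul, smul_eq_mul] at h3
    have h0 : -ξ * D (1, 0, 0) + x * D (0, 1, 0) = 0 := by linarith
    rw [h0] at h3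
    exact h3
  have := is_const_of_deriv_eq_zero (fun θ => (hd θ).differentiableAt)
    (fun θ => (hd θ).deriv) θ 0
  simpa using this

/-! ### Borel's lemma with parameters -/

/-- Uniform bounds for one term `χ(l t) c(e) tᵏ` of the Borel series. With
`w(s, e) = χ(s) c(e) sᵏ` this term is `l⁻ᵏ w(l t, e)`, so each of its derivatives of order `j < k` is
`O(l⁻¹)` uniformly on `ℝ × E`. The same constant also bounds the coefficient. -/
theorem borel_term (χ : ContDiffBump (0 : ℝ)) {c : E → ℝ} (hc : ContDiff ℝ ∞ c)
    (hcs : HasCompactSupport c) (k : ℕ) :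
    ∃ C : ℝ, 0 ≤ C ∧ (∀ e, |c e| ≤ C) ∧ ∀ j ≤ k, ∀ l : ℝ, 1 ≤ l → ∀ z : ℝ × E,
      ‖iteratedFDeriv ℝ j (fun z : ℝ × E => χ (l * z.1) * c z.2 * z.1 ^ k) z‖ ≤
        C * l ^ j / l ^ k := by
  let w : ℝ × E → ℝ := fun z => χ z.1 * c z.2 * z.1 ^ k
  have hw : ContDiff ℝ ∞ w := by
    have := χ.contDiff (n := ⊤)
    simp only [w]
    fun_prop
  have hws : HasCompactSupport w := by
    refine HasCompactSupport.intro (χ.hasCompactSupport.isCompact.prod hcs.isCompact) ?_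
    rintro ⟨s, e⟩ h
    rw [mem_prod, not_and_or] at h
    rcases h with h | h
    · simp [w, image_eq_zero_of_notMem_tsupport h]
    · simp [w, image_eq_zero_of_notMem_tsupport h]
  have hb : ∀ j : ℕ, ∃ C, ∀ z, ‖iteratedFDeriv ℝ j w z‖ ≤ C := fun j =>
    (hws.iteratedFDeriv j).exists_bound_of_continuous
      (hw.continuous_iteratedFDeriv (by exact_mod_cast le_top))
  choose C hC using hb
  obtain ⟨M, hM⟩ := hcs.exists_bound_of_continuous hc.continuous
  have hC0 : ∀ j, 0 ≤ C j := fun j => (norm_nonneg _).trans (hC j 0)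
  have hM0 : 0 ≤ M := (norm_nonneg _).trans (hM 0)
  have hS0 : 0 ≤ ∑ j ∈ Finset.range (k + 1), C j := Finset.sum_nonneg fun j _ => hC0 j
  refine ⟨M + ∑ j ∈ Finset.range (k + 1), C j, by positivity,
    fun e => (hM e).trans (by linarith), fun j hj l hl z => ?_⟩
  have hl0 : 0 < l := by linarith
  let L : ℝ × E →L[ℝ] ℝ × E :=
    (l • ContinuousLinearMap.fst ℝ ℝ E).prod (ContinuousLinearMap.snd ℝ ℝ E)
  have hL : ‖L‖ ≤ l := by
    refine ContinuousLinearMap.opNorm_le_bound _ hl0.le fun z => ?_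
    simp only [L, ContinuousLinearMap.prod_apply, smul_apply, Prod.norm_def,
      ContinuousLinearMap.coe_fst', ContinuousLinearMap.coe_snd', norm_smul, Real.norm_eq_abs,
      abs_of_pos hl0]
    refine max_le (by gcongr; exact le_max_left _ _) ?_
    refine (le_max_right |z.1| ‖z.2‖).trans ?_
    exact le_mul_of_one_le_left (by positivity) hl
  have heq : (fun z : ℝ × E => χ (l * z.1) * c z.2 * z.1 ^ k) = (l ^ k)⁻¹ • (w ∘ L) := by
    ext z
    simp [w, L, mul_pow]
    field_simp
  have hwL : ContDiff ℝ ∞ (w ∘ L) := hw.comp L.contDiff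
  rw [heq, iteratedFDeriv_const_smul_apply (hwL.contDiffAt.of_le (by exact_mod_cast le_top)),
    norm_smul,
    L.iteratedFDeriv_comp_right hw z (by exact_mod_cast le_top)]
  have h1 := (iteratedFDeriv ℝ j w (L z)).norm_compContinuousLinearMap_le fun _ => L
  have h2 : ‖iteratedFDeriv ℝ j w (L z)‖ ≤ M + ∑ j ∈ Finset.range (k + 1), C j := by
    refine (hC j _).trans ?_
    have := Finset.single_le_sum (f := C) (fun j _ => hC0 j)
      (Finset.mem_range.2 (Nat.lt_succ_of_le hj))
    linarith
  rw [Finset.prod_const, Finset.card_univ, Fintype.card_fin] at h1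
  rw [norm_inv, norm_pow, Real.norm_eq_abs, abs_of_pos hl0, ← div_eq_inv_mul]
  gcongr
  refine h1.trans ?_
  gcongr

/-- Borel's lemma with parameters: compactly supported smooth functions `c k` of `e` are the
Taylor coefficients in `t`, along `t = 0`, of a smooth function on `ℝ × E`. -/
theorem exists_borel {c : ℕ → E → ℝ} (hc : ∀ k, ContDiff ℝ ∞ (c k))
    (hcs : ∀ k, HasCompactSupport (c k)) :
    ∃ B : ℝ × E → ℝ, ContDiff ℝ ∞ B ∧ ∀ (n : ℕ) e,
      (fun t : ℝ => B (t, e) - ∑ k ∈ Finset.range n, c k e * t ^ k) =O[𝓝 0] fun t => t ^ n := by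
  let χ : ContDiffBump (0 : ℝ) := ⟨1 / 2, 1, by norm_num, by norm_num⟩
  choose C hC0 hCc hC using fun k => borel_term χ (hc k) (hcs k) k
  -- This scale makes the derivatives of order `< k` of the `k`-th term at most `(1/2)ᵏ`.
  let l : ℕ → ℝ := fun k => 2 ^ k * (1 + C k)
  have h2k : ∀ k : ℕ, (1 : ℝ) ≤ 2 ^ k := fun k => one_le_pow₀ (by norm_num)
  have hl1 : ∀ k, 1 ≤ l k := fun k => one_le_mul_of_one_le_of_one_le (h2k k) (by linarith [hC0 k])
  have hl0 : ∀ k, 0 < l k := fun k => zero_lt_one.trans_le (hl1 k)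
  have hCl : ∀ k, C k / l k ≤ (1 / 2) ^ k := fun k => by
    rw [div_le_iff₀ (hl0 k)]
    simp only [l, ← mul_assoc, ← mul_pow]
    norm_num
  let u : ℕ → ℝ × E → ℝ := fun k z => χ (l k * z.1) * c k z.2 * z.1 ^ k
  have hu : ∀ k, ContDiff ℝ ∞ (u k) := fun k => by
    have := χ.contDiff (n := ⊤)
    have := hc k
    simp only [u]
    fun_prop
  have hgeo : Summable fun k : ℕ => (1 / 2 : ℝ) ^ k := summable_geometric_two
  refine ⟨fun z => ∑' k, u k z, ?_, fun n e => ?_⟩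
  · refine contDiff_tsum_of_eventually (v := fun _ k => (1 / 2) ^ k) hu (fun _ _ => hgeo)
      fun j _ => ?_
    rw [Nat.cofinite_eq_atTop]
    filter_upwards [eventually_gt_atTop j] with k hjk z
    refine (hC k j hjk.le (l k) (hl1 k) z).trans (le_trans ?_ (hCl k))
    rw [div_le_div_iff₀ (pow_pos (hl0 k) _) (hl0 k), mul_assoc, ← pow_succ]
    exact mul_le_mul_of_nonneg_left (pow_le_pow_right₀ (hl1 k) hjk) (hC0 k)
  -- On the support of `χ (l k * t)` one has `|t| ≤ 1 / l k`, which is at most `1`. Of the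
  -- `k` factors `|t|`, `n` are kept, one compensates the coefficient, the others are bounded by `1`.
  · have hbig : ∀ k, n < k → ∀ t : ℝ, |u k (t, e)| ≤ |t| ^ n * (1 / 2) ^ k := by
      intro k hk t
      by_cases ht : |l k * t| < 1
      · obtain ⟨d, rfl⟩ : ∃ d, k = n + 1 + d := ⟨k - (n + 1), by omega⟩
        set k := n + 1 + d
        have h1 : |t| ^ k ≤ |t| ^ n * (1 / l k) := by
          have h2 : |t| ≤ 1 / l k := by
            rw [abs_mul, abs_of_pos (hl0 k)] at ht
            rw [le_div_iff₀ (hl0 k)]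
            linarith
          have h3 : |t| ≤ 1 := h2.trans (by rw [div_le_one (hl0 k)]; exact hl1 k)
          calc |t| ^ k = |t| ^ n * (|t| * |t| ^ d) := by simp only [k]; ring
            _ ≤ |t| ^ n * (1 / l k * 1) := by
              gcongr
              · exact one_div_nonneg.2 (hl0 k).le
              · exact pow_le_one₀ (abs_nonneg _) h3
            _ = _ := by ring
        have hχ : |χ (l k * t)| ≤ 1 := by
          rw [abs_of_nonneg χ.nonneg]; exact χ.le_one
        calc |u k (t, e)| = |χ (l k * t)| * |c k e| * |t| ^ k := by simp [u, abs_mul]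
          _ ≤ 1 * C k * (|t| ^ n * (1 / l k)) := by
            gcongr
            · rw [one_mul]; exact hC0 k
            · exact hCc k e
          _ = |t| ^ n * (C k / l k) := by ring
          _ ≤ _ := by gcongr; exact hCl k
      · have : χ (l k * t) = 0 := χ.zero_of_le_dist (by simpa [χ] using not_lt.1 ht)
        simp only [u, this, zero_mul, abs_zero]
        positivity
    have hsum : ∀ t : ℝ, Summable fun k => u k (t, e) := fun t => by
      rw [← summable_nat_add_iff (n + 1)]
      refine Summable.of_norm_bounded ((hgeo.comp_injective
        (add_left_injective (n + 1))).mul_left (|t| ^ n)) fun k => ?_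
      exact hbig _ (by omega) t
    have htail : (fun t : ℝ => ∑' k, u (k + (n + 1)) (t, e)) =O[𝓝 0] fun t => t ^ n := by
      have hg := (hgeo.comp_injective (add_left_injective (n + 1)))
      refine Asymptotics.IsBigO.of_bound (∑' k : ℕ, (1 / 2 : ℝ) ^ (k + (n + 1)))
        (.of_forall fun t => ?_)
      rw [mul_comm, norm_pow, Real.norm_eq_abs t, ← tsum_mul_left]
      exact tsum_of_norm_bounded (hg.mul_left (|t| ^ n)).hasSum fun k => hbig _ (by omega) t
    have hlast : (fun t : ℝ => c n e * t ^ n) =O[𝓝 0] fun t => t ^ n :=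
      Asymptotics.isBigO_const_mul_self _ _ _
    -- The tail starts at `n + 1`, where `hbig` applies; the term of index `n` is treated separately.
    refine (htail.add hlast).congr' ?_ .rfl
    have hev : ∀ᶠ t : ℝ in 𝓝 0, ∀ k ∈ Finset.range (n + 1), χ (l k * t) = 1 := by
      rw [Filter.eventually_all_finset]
      intro k _
      have : Tendsto (fun t : ℝ => l k * t) (𝓝 0) (𝓝 0) := by
        simpa using (continuous_const_mul (l k)).tendsto (0 : ℝ)
      exact this.eventually χ.eventuallyEq_one
    filter_upwards [hev] with t ht
    rw [← (hsum t).sum_add_tsum_nat_add (n + 1)]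
    have : ∑ k ∈ Finset.range (n + 1), u k (t, e) = ∑ k ∈ Finset.range (n + 1), c k e * t ^ k :=
      Finset.sum_congr rfl fun k hk => by simp [u, ht k hk]
    rw [this, Finset.sum_range_succ]
    ring

/-! ### Hadamard's lemma and Taylor expansion of even functions -/

theorem contDiff_integral_param {P : Type*} [NormedAddCommGroup P] [NormedSpace ℝ P]
    [FiniteDimensional ℝ P] {φ : ℝ × P → ℝ} (hφ : ContDiff ℝ ∞ φ) :
    ContDiff ℝ ∞ (fun p => ∫ s in (0 : ℝ)..1, φ (s, p)) := by
  rw [contDiff_infty]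
  intro n
  induction n generalizing φ with
  | zero =>
    have := hφ.continuous
    exact contDiff_zero.2 (intervalIntegral.continuous_parametric_intervalIntegral_of_continuous'
      (by fun_prop) _ _)
  | succ n ih =>
    have hd : ∀ s p, HasFDerivAt (fun p => φ (s, p))
        ((fderiv ℝ φ (s, p)).comp (ContinuousLinearMap.inr ℝ ℝ P)) p := fun s p =>
      ((hφ.differentiable (by simp)) (s, p)).hasFDerivAt.comp p (hasFDerivAt_prodMk_right s p)
    have hc : Continuous (fun z : ℝ × P => (fderiv ℝ φ z).comp (ContinuousLinearMap.inr ℝ ℝ P)) :=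
      (hφ.continuous_fderiv (by simp)).clm_comp continuous_const
    have hI : ∀ p, HasFDerivAt (fun p => ∫ s in (0 : ℝ)..1, φ (s, p))
        (∫ s in (0 : ℝ)..1, (fderiv ℝ φ (s, p)).comp (ContinuousLinearMap.inr ℝ ℝ P)) p := by
      intro p
      obtain ⟨C, hC⟩ := ((isCompact_Icc (a := (0 : ℝ)) (b := 1)).prod
        (isCompact_closedBall p 1)).exists_bound_of_continuousOn hc.continuousOn
      refine intervalIntegral.hasFDerivAt_integral_of_dominated_of_fderiv_le (bound := fun _ => C)
        (Metric.ball_mem_nhds p one_pos) (.of_forall fun q => ?_) ?_ ?_ (.of_forall ?_) ?_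
        (.of_forall fun s _ q _ => hd s q)
      · exact (hφ.continuous.comp (by fun_prop : Continuous fun s : ℝ => (s, q))).aestronglyMeasurable
      · exact (hφ.continuous.comp
          (by fun_prop : Continuous fun s : ℝ => (s, p))).intervalIntegrable _ _
      · exact (hc.comp (by fun_prop : Continuous fun s : ℝ => (s, p))).aestronglyMeasurable
      · intro s hs q hq
        rw [uIoc_of_le zero_le_one] at hs
        exact hC (s, q) ⟨Ioc_subset_Icc_self hs, Metric.ball_subset_closedBall hq⟩
      · simp
    push_cast
    rw [contDiff_succ_iff_fderiv_apply]
    refine ⟨fun p => (hI p).differentiableAt, by simp, fun y => ?_⟩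
    have : (fun p => fderiv ℝ (fun p => ∫ s in (0 : ℝ)..1, φ (s, p)) p y) =
        fun p => ∫ s in (0 : ℝ)..1, (fun z => fderiv ℝ φ z (0, y)) (s, p) := by
      ext p
      rw [(hI p).fderiv, ContinuousLinearMap.intervalIntegral_apply]
      · simp
      · exact (hc.comp (by fun_prop : Continuous fun s : ℝ => (s, p))).intervalIntegrable _ _
    rw [this]
    exact ih ((hφ.fderiv_right (m := ∞) (by simp)).clm_apply contDiff_const)

variable [FiniteDimensional ℝ E]

/-- Hadamard's lemma with a parameter: the quotient is `∫₀¹ ∂ₓH(sx, e) ds`. -/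
theorem hadamard {H : ℝ × E → ℝ} (hH : ContDiff ℝ ∞ H) (h0 : ∀ e, H (0, e) = 0) :
    ∃ K : ℝ × E → ℝ, ContDiff ℝ ∞ K ∧ ∀ x e, H (x, e) = x * K (x, e) := by
  refine ⟨fun p => ∫ s in (0 : ℝ)..1, fderiv ℝ H (s * p.1, p.2) (1, 0), ?_, fun x e => ?_⟩
  · refine contDiff_integral_param (φ := fun z : ℝ × ℝ × E => fderiv ℝ H (z.1 * z.2.1, z.2.2) (1, 0)) ?_
    exact ((hH.fderiv_right (m := ∞) (by simp)).comp (by fun_prop)).clm_apply contDiff_const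
  · have hc : Continuous fun s : ℝ => fderiv ℝ H (s * x, e) (x, 0) :=
      ((hH.continuous_fderiv (by simp)).comp
        (by fun_prop : Continuous fun s : ℝ => (s * x, e))).clm_apply continuous_const
    have := intervalIntegral.integral_eq_sub_of_hasDerivAt (a := 0) (b := 1)
      (f := fun s : ℝ => H (s * x, e)) (f' := fun s => fderiv ℝ H (s * x, e) (x, 0))
      (fun s _ => by
        have h1 : HasDerivAt (fun s : ℝ => (s * x, e)) (x, 0) s := by
          simpa using ((hasDerivAt_id s).mul_const x).prodMk (hasDerivAt_const s e)
        exact ((hH.differentiable (by simp)) (s * x, e)).hasFDerivAt.comp_hasDerivAt s h1)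
      (hc.intervalIntegrable _ _)
    simp only [one_mul, zero_mul, h0, sub_zero] at this
    rw [← this, ← intervalIntegral.integral_const_mul]
    congr 1
    ext s
    have : ((x, 0) : ℝ × E) = x • (1, 0) := by simp
    rw [this, map_smul, smul_eq_mul]

/-- Applying Hadamard's lemma twice: the first quotient is odd in `x`, hence vanishes at `x = 0`
and can be divided again. -/
theorem even_div {h : ℝ × E → ℝ} (hh : ContDiff ℝ ∞ h) (hev : ∀ x e, h (-x, e) = h (x, e)) :
    ∃ r : ℝ × E → ℝ, ContDiff ℝ ∞ r ∧ (∀ x e, r (-x, e) = r (x, e)) ∧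
      ∀ x e, h (x, e) = h (0, e) + x ^ 2 * r (x, e) := by
  obtain ⟨p, hp, hpe⟩ := hadamard (H := fun z => h z - h (0, z.2)) (by fun_prop) (by simp)
  -- Identities between continuous functions may be checked for `x ≠ 0`, where one can cancel `x`.
  have ext0 : ∀ {a b : ℝ × E → ℝ}, Continuous a → Continuous b →
      (∀ x e, x ≠ 0 → a (x, e) = b (x, e)) → ∀ x e, a (x, e) = b (x, e) := by
    intro a b ha hb hab x e
    have : EqOn (fun x : ℝ => a (x, e)) (fun x => b (x, e)) {0}ᶜ := fun x hx => hab x e hx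
    exact congrFun ((by fun_prop : Continuous fun x : ℝ => a (x, e)).ext_on
      (dense_compl_singleton 0) (by fun_prop) this) x
  have hodd : ∀ x e, p (-x, e) = - p (x, e) := by
    refine ext0 (a := fun z => p (-z.1, z.2)) (b := fun z => - p z) ?_ ?_ ?_
    · have := hp.continuous; fun_prop
    · have := hp.continuous; fun_prop
    · intro x e hx
      have h1 := hpe x e
      have h2 := hpe (-x) e
      simp only [hev] at h1 h2
      apply mul_left_cancel₀ hx
      simp only at *
      linarith
  obtain ⟨r, hr, hpr⟩ := hadamard hp (fun e => by have := hodd 0 e; simp at this; linarith)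
  refine ⟨r, hr, ?_, fun x e => ?_⟩
  · refine ext0 (a := fun z => r (-z.1, z.2)) (b := r) ?_ hr.continuous ?_
    · have := hr.continuous; fun_prop
    · intro x e hx
      have h1 := hodd x e
      rw [hpr, hpr] at h1
      apply mul_left_cancel₀ hx
      simp only at *
      linarith
  · have := hpe x e
    rw [hpr] at this
    simp only at this
    linarith

/-- The Taylor expansion in `x²` of a smooth even function, with smooth coefficients and
remainders; the coefficients `b k` do not depend on the order `n`. -/
theorem even_expansion {h : ℝ × E → ℝ} (hh : ContDiff ℝ ∞ h)
    (hev : ∀ x e, h (-x, e) = h (x, e)) :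
    ∃ b : ℕ → E → ℝ, (∀ k, ContDiff ℝ ∞ (b k)) ∧ ∀ n, ∃ r : ℝ × E → ℝ, ContDiff ℝ ∞ r ∧
      ∀ x e, h (x, e) = ∑ k ∈ Finset.range n, b k e * (x ^ 2) ^ k + (x ^ 2) ^ n * r (x, e) := by
  let S := {h : ℝ × E → ℝ // ContDiff ℝ ∞ h ∧ ∀ x e, h (-x, e) = h (x, e)}
  have hstep : ∀ u : S, ∃ v : S, ∀ x e, u.1 (x, e) = u.1 (0, e) + x ^ 2 * v.1 (x, e) := by
    rintro ⟨u, hu, hue⟩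
    obtain ⟨r, hr, hre, h⟩ := even_div hu hue
    exact ⟨⟨r, hr, hre⟩, h⟩
  choose D hD using hstep
  let u : ℕ → S := fun n => D^[n] ⟨h, hh, hev⟩
  have hu : ∀ n, u (n + 1) = D (u n) := fun n => Function.iterate_succ_apply' _ _ _
  refine ⟨fun k e => (u k).1 (0, e), fun k => ?_, fun n => ⟨(u n).1, (u n).2.1, fun x e => ?_⟩⟩
  · have := (u k).2.1
    fun_prop
  · induction n with
    | zero => simp [u]
    | succ n ih =>
      rw [ih, Finset.sum_range_succ, hu, hD (u n) x e]
      ring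

/-! ### Flat functions and the square root -/

/-- Flatness along `x = 0` is expressed by the pointwise estimates `H(x, e) = O(xⁿ)` for all `n`,
which need not be uniform in `e`: they only serve to see that each successive Hadamard quotient
vanishes at `x = 0`. -/
theorem flat_div {H : ℝ × E → ℝ} (hH : ContDiff ℝ ∞ H)
    (hflat : ∀ (n : ℕ) e, (fun x : ℝ => H (x, e)) =O[𝓝 0] fun x => x ^ n) (N : ℕ) :
    ∃ K : ℝ × E → ℝ, ContDiff ℝ ∞ K ∧ ∀ x e, H (x, e) = x ^ N * K (x, e) := by
  induction N with
  | zero => exact ⟨H, hH, by simp⟩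
  | succ N ih =>
    obtain ⟨K, hK, hHK⟩ := ih
    have h0 : ∀ e, K (0, e) = 0 := by
      intro e
      have h1 := hflat (N + 1) e
      have h2 : (fun x : ℝ => K (x, e)) =O[𝓝[≠] 0] fun x => x := by
        have h3 := (Asymptotics.isBigO_refl (fun x : ℝ => (x ^ N)⁻¹) (𝓝[≠] 0)).mul
          (h1.mono (nhdsWithin_le_nhds (s := {0}ᶜ)))
        refine h3.congr' ?_ ?_
        · filter_upwards [self_mem_nhdsWithin] with x hx
          have : x ≠ 0 := hx
          rw [hHK]; field_simp
        · filter_upwards [self_mem_nhdsWithin] with x hx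
          have : x ≠ 0 := hx
          field_simp
          ring
      have h4 : Tendsto (fun x : ℝ => K (x, e)) (𝓝[≠] 0) (𝓝 0) :=
        h2.trans_tendsto (tendsto_id.mono_left nhdsWithin_le_nhds)
      have h5 : Tendsto (fun x : ℝ => K (x, e)) (𝓝[≠] 0) (𝓝 (K (0, e))) := by
        have := hK.continuous
        exact ((by fun_prop : Continuous fun x : ℝ => K (x, e)).tendsto 0).mono_left
          nhdsWithin_le_nhds
      exact tendsto_nhds_unique h5 h4
    obtain ⟨L, hL, hKL⟩ := hadamard hK h0
    exact ⟨L, hL, fun x e => by rw [hHK, hKL]; ring⟩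

/-- For `t < 0` the junk value `√t = 0` makes this function vanish. Differentiating it lowers the
exponent of `√t` by two and otherwise reproduces a function of the same form, so the claim follows
by induction on `m`. -/
theorem contDiff_sqrt_pow (m n : ℕ) (hmn : m ≤ n) {K : ℝ × E → ℝ} (hK : ContDiff ℝ ∞ K) :
    ContDiff ℝ m fun z : ℝ × E => √z.1 ^ (2 * n + 1) * K (√z.1, z.2) := by
  induction m generalizing n K with
  | zero =>
    have := hK.continuous
    exact contDiff_zero.2 (by fun_prop)
  | succ m ih =>
    obtain ⟨n, rfl⟩ : ∃ n', n = n' + 1 := ⟨n - 1, by omega⟩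
    -- Since `d√t = dt / (2√t)`, the derivative of the function is `√t ^ (2n + 1) • D (√t, e)`.
    let D : ℝ × E → (ℝ × E →L[ℝ] ℝ) := fun w =>
      ((2 * n + 3 : ℝ) / 2 * K w + w.1 / 2 * fderiv ℝ K w (1, 0)) •
        ContinuousLinearMap.fst ℝ ℝ E +
      w.1 ^ 2 • (fderiv ℝ K w).comp
        ((ContinuousLinearMap.inr ℝ ℝ E).comp (ContinuousLinearMap.snd ℝ ℝ E))
    have hd : ∀ z : ℝ × E,
        HasFDerivAt (fun z : ℝ × E => √z.1 ^ (2 * (n + 1) + 1) * K (√z.1, z.2))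
          (√z.1 ^ (2 * n + 1) • D (√z.1, z.2)) z := by
      rintro ⟨t, e⟩
      rcases lt_trichotomy t 0 with ht | rfl | ht
      · have h0 : (fun z : ℝ × E => √z.1 ^ (2 * (n + 1) + 1) * K (√z.1, z.2)) =ᶠ[𝓝 (t, e)]
            fun _ => 0 := by
          filter_upwards [continuous_fst.continuousAt.eventually (gt_mem_nhds ht)] with z hz
          rw [Real.sqrt_eq_zero_of_nonpos hz.le]
          simp
        rw [Real.sqrt_eq_zero_of_nonpos ht.le]
        simpa using (hasFDerivAt_const (0 : ℝ) (t, e)).congr_of_eventuallyEq h0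
      -- Near the boundary the function is `t` times a continuous function vanishing at `t = 0`.
      · have hG : ∀ z : ℝ × E, √z.1 ^ (2 * (n + 1) + 1) * K (√z.1, z.2) =
            z.1 * (√z.1 ^ (2 * n + 1) * K (√z.1, z.2)) := by
          rintro ⟨t, e⟩
          rcases le_total 0 t with ht | ht
          · have h : √t ^ (2 * (n + 1) + 1) = √t ^ 2 * √t ^ (2 * n + 1) := by ring
            simp only [h, Real.sq_sqrt ht, mul_assoc]
          · simp [Real.sqrt_eq_zero_of_nonpos ht]
        have hM : Tendsto (fun z : ℝ × E => √z.1 ^ (2 * n + 1) * K (√z.1, z.2)) (𝓝 (0, e))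
            (𝓝 0) := by
          have := hK.continuous
          have h := (by fun_prop : Continuous fun z : ℝ × E =>
            √z.1 ^ (2 * n + 1) * K (√z.1, z.2)).tendsto (0, e)
          simpa using h
        refine HasFDerivAt.of_isLittleO ?_
        have h1 : (fun z : ℝ × E => z.1) =O[𝓝 (0, e)] fun z => ‖z - (0, e)‖ :=
          Asymptotics.IsBigO.of_bound 1 (.of_forall fun z => by
            have := norm_fst_le (z - (0, e))
            simpa only [Prod.fst_sub, sub_zero, one_mul, norm_norm] using this)
        have h2 := h1.mul_isLittleO ((Asymptotics.isLittleO_one_iff ℝ).2 hM)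
        simp only [hG]
        simpa using h2.norm_right
      · have hx : √t ≠ 0 := (Real.sqrt_pos.2 ht).ne'
        have h1 : HasFDerivAt (fun z : ℝ × E => √z.1)
            ((1 / (2 * √t)) • ContinuousLinearMap.fst ℝ ℝ E) (t, e) :=
          (Real.hasDerivAt_sqrt ht.ne').comp_hasFDerivAt (t, e) hasFDerivAt_fst
        have h2 := h1.prodMk (hasFDerivAt_snd (𝕜 := ℝ) (p := (t, e)))
        have h3 := ((hK.differentiable (by simp)) (√t, e)).hasFDerivAt.comp (t, e) h2
        refine ((h1.pow (2 * (n + 1) + 1)).mul h3).congr_fderiv ?_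
        refine ContinuousLinearMap.ext fun ⟨a, v⟩ => ?_
        have hv : ((1 / (2 * √t) * a, v) : ℝ × E) = (a / (2 * √t)) • (1, 0) + (0, v) := by
          simp
          ring
        have hv' : fderiv ℝ K (√t, e) (1 / (2 * √t) * a, v) =
            a / (2 * √t) * fderiv ℝ K (√t, e) (1, 0) + fderiv ℝ K (√t, e) (0, v) := by
          rw [hv, map_add, map_smul, smul_eq_mul]
        simp [D, -one_div, hv']
        field_simp
        ring
    push_cast
    rw [contDiff_succ_iff_fderiv_apply]
    refine ⟨fun z => (hd z).differentiableAt, by simp, fun y => ?_⟩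
    simp only [(hd _).fderiv]
    refine ih n (by omega) (K := fun w => D w y) ?_
    have := hK.fderiv_right (m := ∞) (by simp)
    simp only [D]
    fun_prop

/-- A flat function `H(x, e)` stays smooth after substituting `x = √t`, extended by zero to
`t < 0`. -/
theorem contDiff_flat_sqrt {H : ℝ × E → ℝ} (hH : ContDiff ℝ ∞ H)
    (hflat : ∀ (n : ℕ) e, (fun x : ℝ => H (x, e)) =O[𝓝 0] fun x => x ^ n) :
    ContDiff ℝ ∞ fun z : ℝ × E => H (√z.1, z.2) := by
  refine contDiff_infty.2 fun m => ?_
  obtain ⟨K, hK, hHK⟩ := flat_div hH hflat (2 * m + 1)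
  simp only [hHK]
  exact contDiff_sqrt_pow m m le_rfl hK

/-! ### Whitney's even function theorem -/

/-- The even function theorem near a point `e₀` of the parameter space. After cutting off in `e`, the
extension is a Borel sum `B(t, e)` plus the flat remainder evaluated at `x = √t`. -/
theorem exists_local {h : ℝ × E → ℝ} (hh : ContDiff ℝ ∞ h)
    (hev : ∀ x e, h (-x, e) = h (x, e)) (e₀ : E) :
    ∃ U ∈ 𝓝 e₀, ∃ g : ℝ × E → ℝ, ContDiff ℝ ∞ g ∧
      ∀ t, 0 ≤ t → ∀ e ∈ U, g (t, e) = h (√t, e) := by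
  obtain ⟨b, hb, hbr⟩ := even_expansion hh hev
  let θ : ContDiffBump e₀ := default
  have hθ := θ.contDiff (n := ⊤)
  obtain ⟨B, hB, hBO⟩ := exists_borel (c := fun k e => θ e * b k e)
    (fun k => hθ.mul (hb k)) (fun k => θ.hasCompactSupport.mul_right)
  let H : ℝ × E → ℝ := fun z => θ z.2 * h z - B (z.1 ^ 2, z.2)
  have hH : ContDiff ℝ ∞ H := by simp only [H]; fun_prop
  have hflat : ∀ (n : ℕ) e, (fun x : ℝ => H (x, e)) =O[𝓝 0] fun x => x ^ n := by
    intro n e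
    obtain ⟨r, hr, hre⟩ := hbr n
    have hsq : Tendsto (fun x : ℝ => x ^ 2) (𝓝 0) (𝓝 0) := by
      simpa using (continuous_pow 2).tendsto (0 : ℝ)
    have h1 := (hBO n e).comp_tendsto hsq
    have h2 : (fun x : ℝ => (x ^ 2) ^ n * (θ e * r (x, e))) =O[𝓝 0] fun x => (x ^ 2) ^ n := by
      have hc : Tendsto (fun x : ℝ => θ e * r (x, e)) (𝓝 0) (𝓝 (θ e * r (0, e))) := by
        have := hr.continuous
        exact (by fun_prop : Continuous fun x : ℝ => θ e * r (x, e)).tendsto 0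
      simpa using (Asymptotics.isBigO_refl (fun x : ℝ => (x ^ 2) ^ n) (𝓝 0)).mul
        (hc.isBigO_one ℝ)
    have h3 : (fun x : ℝ => (x ^ 2) ^ n) =O[𝓝 0] fun x => x ^ n := by
      have hc : Tendsto (fun x : ℝ => x ^ n) (𝓝 0) (𝓝 (0 ^ n)) := (continuous_pow n).tendsto 0
      refine ((Asymptotics.isBigO_refl (fun x : ℝ => x ^ n) (𝓝 0)).mul
        (hc.isBigO_one ℝ)).congr (fun x => by ring) (fun x => by ring)
    refine ((h2.sub h1).trans h3).congr_left fun x => ?_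
    simp only [H, Function.comp, hre x e, mul_add, Finset.mul_sum, mul_assoc]
    ring
  refine ⟨_, θ.eventuallyEq_one, fun z => B z + H (√z.1, z.2),
    hB.add (contDiff_flat_sqrt hH hflat), fun t ht e he => ?_⟩
  have he : θ e = 1 := he
  simp [H, Real.sq_sqrt ht, he]

open scoped Manifold in
/-- Whitney's even function theorem with parameters. The local extensions are glued by a partition
of unity: the values allowed at `(t, e)` form a convex set, a single point for `t ≥ 0` and all of `ℝ`
for `t < 0`. -/
theorem whitney_even {h : ℝ × E → ℝ} (hh : ContDiff ℝ ∞ h)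
    (hev : ∀ x e, h (-x, e) = h (x, e)) :
    ∃ g : ℝ × E → ℝ, ContDiff ℝ ∞ g ∧ ∀ t, 0 ≤ t → ∀ e, g (t, e) = h (√t, e) := by
  obtain ⟨g, hg⟩ := exists_contMDiffMap_forall_mem_convex_of_local (n := ⊤) 𝓘(ℝ, ℝ × E)
    (t := fun z : ℝ × E => {y : ℝ | 0 ≤ z.1 → y = h (√z.1, z.2)})
    (fun z y hy y' hy' a b _ _ hab h0 => by
      rw [hy h0, hy' h0, ← add_smul, hab, one_smul])
    (fun z => by
      obtain ⟨U, hU, g, hg, hgh⟩ := exists_local hh hev z.2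
      exact ⟨Prod.snd ⁻¹' U, continuous_snd.continuousAt.preimage_mem_nhds hU, g,
        hg.contMDiff.contMDiffOn, fun y hy h0 => hgh y.1 h0 y.2 hy⟩)
  exact ⟨g, g.contMDiff.contDiff, fun t ht e => hg (t, e) ht⟩

end EvenFunctions


/-- if `f : ℝ² × E → ℝ` is smooth and Poisson-commutes with
`q(x,ξ) = x² + ξ²` (in the `(x,ξ)` variables), then `f` factors as a function of
`q` which is smooth on `ℝ_{≥0} × E` — i.e. (equivalently) admits a smooth extension
`g` to `ℝ × E` with `f (x, ξ, e) = g (x² + ξ², e)`. -/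
theorem factor_through_harmonic_oscillator
    {E : Type*} [NormedAddCommGroup E] [NormedSpace ℝ E] [FiniteDimensional ℝ E]
    (f : ℝ → ℝ → E → ℝ)
    (hf : ContDiff ℝ (⊤ : ℕ∞) (fun p : ℝ × ℝ × E => f p.1 p.2.1 p.2.2))
    (hbracket : ∀ (x ξ : ℝ) (e : E),
      2 * x * deriv (fun s => f x s e) ξ - 2 * ξ * deriv (fun s => f s ξ e) x = 0) :
    ∃ g : ℝ → E → ℝ,
      ContDiff ℝ (⊤ : ℕ∞) (fun p : ℝ × E => g p.1 p.2) ∧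
      ∀ (x ξ : ℝ) (e : E), f x ξ e = g (x ^ 2 + ξ ^ 2) e := by
  have hrot := rotation_invariant f hf hbracket
  obtain ⟨g, hg, hgf⟩ := whitney_even (h := fun z : ℝ × E => f z.1 0 z.2)
    (hf.comp (by fun_prop : ContDiff ℝ (⊤ : ℕ∞) fun z : ℝ × E => (z.1, (0 : ℝ), z.2)))
    (fun x e => by simpa using hrot x Real.pi e)
  refine ⟨fun t e => g (t, e), hg, fun x ξ e => ?_⟩
  change f x ξ e = g (x ^ 2 + ξ ^ 2, e)
  rw [hgf _ (by positivity)]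
  have hn : ‖(⟨x, ξ⟩ : ℂ)‖ = √(x ^ 2 + ξ ^ 2) := by
    rw [Complex.norm_eq_sqrt_sq_add_sq]
  have hc := Complex.norm_mul_cos_arg ⟨x, ξ⟩
  have hs := Complex.norm_mul_sin_arg ⟨x, ξ⟩
  rw [hn] at hc hs
  have key := hrot (√(x ^ 2 + ξ ^ 2)) (Complex.arg ⟨x, ξ⟩) e
  rwa [hc, hs] at key
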